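/- For every constant 0 < δ < 1 there exist a constant d > 0 and an integer N (both depending only on δ) such that the following holds for all n ≥ N. Let H = (V, E) be an unweighted graph equal to a star S_n plus a subgraph H[V'] = (V', E') supported on the n leaves V'. If H[V'] has no path cover 𝒫 with |𝒫| < δn, then for every edge set P ⊆ E' with |P| ≤ n − 1, T(S_n + P) ≤ (1 + d)^{−n} · T(F_n). -/

import Mathlib

open Matrix

/-- The Laplacian matrix of a weighted graph given by a weight function. -/
def lapG {V : Type*} [Fintype V] [DecidableEq V] (W : V → V → ℝ) : Matrix V V ℝ :=
  fun i j => if i = j then ∑ k, W i k else -(W i j)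

/-- The (weighted) number of spanning trees: determinant of the Laplacian with the
row and column of the last vertex removed. -/
def nst {n : ℕ} (W : Fin (n + 1) → Fin (n + 1) → ℝ) : ℝ :=
  ((lapG W).submatrix Fin.castSucc Fin.castSucc).det

/-- The star graph `S_n`: the central vertex is `Fin.last n`, joined to the `n`
leaves `0, …, n-1` by unit-weight edges. -/
def starW (n : ℕ) : Fin (n + 1) → Fin (n + 1) → ℝ :=
  fun i j => if i ≠ j ∧ (i = Fin.last n ∨ j = Fin.last n) then 1 else 0

/-- The fan graph `F_n`: the star `S_n` plus a path of `n - 1` unit-weight edges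
through the `n` leaves. -/
def fanW (n : ℕ) : Fin (n + 1) → Fin (n + 1) → ℝ :=
  fun i j => starW n i j +
    if ((i : ℕ) + 1 = (j : ℕ) ∧ j ≠ Fin.last n) ∨
       ((j : ℕ) + 1 = (i : ℕ) ∧ i ≠ Fin.last n) then 1 else 0

/-- The star `S_n` plus the set `P` of unit-weight edges between leaves. -/
def starPlusEdges (n : ℕ) (P : Finset (Sym2 (Fin n))) : Fin (n + 1) → Fin (n + 1) → ℝ :=
  fun i j => starW n i j +
    if ∃ a b : Fin n, i = a.castSucc ∧ j = b.castSucc ∧ s(a, b) ∈ P then 1 else 0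

/-- `Ps` is a path cover of the graph on the `n` leaves with edge set `E`:
each member is a nonempty duplicate-free list whose consecutive pairs are
edges of `E`, the members are pairwise vertex-disjoint, and every leaf is covered. -/
def IsPathCoverOf (n : ℕ) (E : Finset (Sym2 (Fin n))) (Ps : List (List (Fin n))) : Prop :=
  (∀ l ∈ Ps, l ≠ [] ∧ l.Nodup ∧ l.Chain' (fun a b => s(a, b) ∈ E)) ∧
    Ps.Pairwise (fun l₁ l₂ => ∀ x ∈ l₁, x ∉ l₂) ∧
    (∀ v : Fin n, ∃ l ∈ Ps, v ∈ l)

set_option linter.unusedSectionVars false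
set_option linter.unusedDecidableInType false
set_option linter.unusedFintypeInType false
open Finset

section matrixPart
variable {V : Type*} [Fintype V] [DecidableEq V]

/-- Reduced Laplacian of the star plus the edges `T`. -/
def Lm (T : Finset (Sym2 V)) : Matrix V V ℝ := fun i j =>
  if i = j then 1 + ∑ k, (if s(i, k) ∈ T then (1 : ℝ) else 0)
  else -(if s(i, j) ∈ T then (1 : ℝ) else 0)

/-- Squared difference along an edge. -/
def dq (x : V → ℝ) : Sym2 V → ℝ :=
  Sym2.lift ⟨fun a b => (x a - x b) ^ 2, fun a b => by ring⟩

lemma dq_mk (x : V → ℝ) (a b : V) : dq x s(a, b) = (x a - x b) ^ 2 := rfl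

lemma dq_nonneg (x : V → ℝ) (e : Sym2 V) : 0 ≤ dq x e := by
  induction e with
  | _ a b => rw [dq_mk]; positivity

/-- Energy. -/
def qf (T : Finset (Sym2 V)) (x : V → ℝ) : ℝ := ∑ v, x v ^ 2 + ∑ e ∈ T, dq x e

lemma qf_nonneg (T : Finset (Sym2 V)) (x : V → ℝ) : 0 ≤ qf T x := by
  unfold qf
  have h1 : 0 ≤ ∑ v, x v ^ 2 := Finset.sum_nonneg fun v _ => sq_nonneg _
  have h2 : 0 ≤ ∑ e ∈ T, dq x e := Finset.sum_nonneg fun e _ => dq_nonneg x e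
  linarith

lemma qf_mono {T T' : Finset (Sym2 V)} (h : T ⊆ T') (x : V → ℝ) : qf T x ≤ qf T' x := by
  unfold qf
  have := Finset.sum_le_sum_of_subset_of_nonneg h (fun e _ _ => dq_nonneg x e)
  linarith

/-- The difference vector. -/
def bv (u v : V) : V → ℝ := fun i => (if i = u then 1 else 0) - (if i = v then 1 else 0)

lemma dot_bv (u v : V) (x : V → ℝ) : x ⬝ᵥ bv u v = x u - x v := by
  simp [dotProduct, bv, mul_sub, Finset.sum_sub_distrib]

lemma Lm_empty : Lm (∅ : Finset (Sym2 V)) = 1 := by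
  ext i j
  simp [Lm, Matrix.one_apply]

lemma Lm_insert (T : Finset (Sym2 V)) (u v : V) (huv : u ≠ v) (h : s(u, v) ∉ T) :
    Lm (insert s(u, v) T) = Lm T + vecMulVec (bv u v) (bv u v) := by
  have key : ∀ i k : V, (if s(i, k) ∈ insert s(u, v) T then (1 : ℝ) else 0)
      = (if s(i, k) ∈ T then (1 : ℝ) else 0)
        + ((if i = u then (if k = v then 1 else 0) else 0)
          + (if i = v then (if k = u then 1 else 0) else 0)) := by
    intro i k
    by_cases h1 : i = u ∧ k = v
    · obtain ⟨rfl, rfl⟩ := h1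
      simp [h, huv]
    · by_cases h2 : i = v ∧ k = u
      · obtain ⟨rfl, rfl⟩ := h2
        have : s(i, k) = s(k, i) := Sym2.eq_swap
        simp [this, h, huv.symm]
      · have h3 : ¬ (s(i, k) = s(u, v)) := by
          rw [Sym2.eq_iff]; tauto
        have e1 : (if i = u then (if k = v then (1:ℝ) else 0) else 0) = 0 := by
          split_ifs <;> tauto
        have e2 : (if i = v then (if k = u then (1:ℝ) else 0) else 0) = 0 := by
          split_ifs <;> tauto
        rw [e1, e2]
        simp [Finset.mem_insert, h3]
  ext i j
  simp only [Lm, Matrix.add_apply, vecMulVec_apply, bv]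
  by_cases hij : i = j
  · subst hij
    simp only [if_true, key, Finset.sum_add_distrib]
    by_cases hu : i = u
    · subst hu
      simp [huv]
      ring
    · by_cases hv : i = v
      · subst hv; simp [huv.symm]; ring
      · simp [hu, hv]
  · simp only [if_neg hij, key]
    by_cases hu : i = u
    · subst hu
      have : j ≠ i := fun h => hij h.symm
      simp [huv, this]; ring
    · by_cases hv : i = v
      · subst hv
        have : j ≠ i := fun h => hij h.symm
        simp [huv.symm, this]; split_ifs <;> ring
      · simp [hu, hv]

lemma Lm_symm (T : Finset (Sym2 V)) : (Lm T)ᵀ = Lm T := by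
  ext i j
  simp only [Lm, Matrix.transpose_apply]
  by_cases h : i = j
  · subst h; rfl
  · rw [if_neg h, if_neg (Ne.symm h), Sym2.eq_swap]

lemma Lm_qf (T : Finset (Sym2 V)) (hT : ∀ e ∈ T, ¬ e.IsDiag) (x : V → ℝ) :
    x ⬝ᵥ (Lm T *ᵥ x) = qf T x := by
  induction T using Finset.induction_on with
  | empty => 
    simp [Lm_empty, qf, dotProduct, sq]
  | insert e T he ih =>
    have ih := ih (fun e' h' => hT e' (Finset.mem_insert_of_mem h'))
    have hd := hT e (Finset.mem_insert_self _ _)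
    induction e with
    | _ u v =>
    have huv : u ≠ v := by simpa using hd
    rw [Lm_insert T u v huv he, Matrix.add_mulVec, dotProduct_add, ih, qf, qf,
      Finset.sum_insert he, dq_mk, Matrix.vecMulVec_mulVec]
    have : bv u v ⬝ᵥ x = x u - x v := by rw [dotProduct_comm, dot_bv]
    rw [this]
    simp only [op_smul_eq_smul, dotProduct_smul, dot_bv, smul_eq_mul]
    ring

lemma det_step (T : Finset (Sym2 V)) (hT : ∀ e ∈ T, ¬ e.IsDiag) (u v : V) (huv : u ≠ v)
    (he : s(u, v) ∉ T) (hdet : 0 < (Lm T).det) :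
    ∃ R : ℝ, 0 ≤ R ∧ (Lm (insert s(u, v) T)).det = (Lm T).det * (1 + R) ∧
      (∀ c : ℝ, (∀ x, (x u - x v) ^ 2 ≤ c * qf T x) → R ≤ c) ∧
      (∀ x, (x u - x v) ^ 2 ≤ R * qf T x) := by
  have hU : IsUnit (Lm T).det := isUnit_iff_ne_zero.2 hdet.ne'
  set y := (Lm T)⁻¹ *ᵥ bv u v with hy
  have hMy : Lm T *ᵥ y = bv u v := by
    rw [hy, Matrix.mulVec_mulVec, Matrix.mul_nonsing_inv _ hU, Matrix.one_mulVec]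
  have hq : qf T y = y u - y v := by
    rw [← Lm_qf T hT, hMy, dot_bv]
  have hR : 0 ≤ y u - y v := hq ▸ qf_nonneg T y
  have hRpos : 0 < y u - y v := by
    rcases hR.lt_or_eq with h | h
    · exact h
    · exfalso
      have h0 : ∑ w, y w ^ 2 ≤ 0 := by
        have h2 : 0 ≤ ∑ e ∈ T, dq y e := Finset.sum_nonneg fun e _ => dq_nonneg y e
        have := hq; unfold qf at this; linarith
      have h1 : y = 0 := by
        ext w
        have := Finset.single_le_sum (f := fun w => y w ^ 2) (fun i _ => sq_nonneg (y i))
          (Finset.mem_univ w)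
        have : y w ^ 2 = 0 := le_antisymm (this.trans h0) (sq_nonneg _)
        simpa using this
      rw [h1, Matrix.mulVec_zero] at hMy
      have := congrFun hMy u
      simp [bv, huv] at this
  refine ⟨y u - y v, hR, ?_, ?_, ?_⟩
  · rw [Lm_insert T u v huv he]
    have : Lm T + vecMulVec (bv u v) (bv u v)
        = Lm T * (1 + replicateCol Unit y * replicateRow Unit (bv u v)) := by
      rw [Matrix.mul_add, Matrix.mul_one, ← Matrix.vecMulVec_eq, Matrix.mul_vecMulVec, hMy]
    rw [this, Matrix.det_mul, Matrix.det_one_add_replicateCol_mul_replicateRow, dotProduct_comm,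
      dot_bv]
  · intro c hc
    have := hc y
    rw [hq] at this
    nlinarith
  · intro x
    set R := y u - y v with hRdef
    set t := x u - x v with ht
    have h1 : x ⬝ᵥ (Lm T *ᵥ y) = t := by rw [hMy, dot_bv]
    have h2 : y ⬝ᵥ (Lm T *ᵥ x) = t := by
      rw [Matrix.dotProduct_mulVec, ← Matrix.mulVec_transpose, Lm_symm, hMy, dotProduct_comm, dot_bv]
    have h3 : y ⬝ᵥ (Lm T *ᵥ y) = R := by rw [hMy, dot_bv]
    have h4 := qf_nonneg T (R • x - t • y)
    rw [← Lm_qf T hT, Matrix.mulVec_sub, Matrix.mulVec_smul, Matrix.mulVec_smul] at h4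
    simp only [sub_dotProduct, dotProduct_sub, smul_dotProduct, dotProduct_smul, smul_eq_mul,
      h1, h2, h3, Lm_qf T hT] at h4
    have h5 : 0 ≤ R * (R * qf T x - t ^ 2) := by nlinarith
    have := nonneg_of_mul_nonneg_right h5 hRpos
    linarith

lemma det_pos_Lm (T : Finset (Sym2 V)) (hT : ∀ e ∈ T, ¬ e.IsDiag) : 0 < (Lm T).det := by
  induction T using Finset.induction_on with
  | empty => simp [Lm_empty]
  | insert e T he ih =>
    have hT' := (fun e' h' => hT e' (Finset.mem_insert_of_mem h'))
    have ih := ih hT'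
    have hd := hT e (Finset.mem_insert_self _ _)
    induction e with
    | _ u v =>
    have huv : u ≠ v := by simpa using hd
    obtain ⟨R, hR, h1, -⟩ := det_step T hT' u v huv he ih
    rw [h1]; positivity

/-- Upper bound for adding an edge (possibly already present). -/
lemma det_insert_le (T : Finset (Sym2 V)) (hT : ∀ e ∈ T, ¬ e.IsDiag) (u v : V) (huv : u ≠ v)
    (c : ℝ) (hc0 : 0 ≤ c) (hc : ∀ x, (x u - x v) ^ 2 ≤ c * qf T x) :
    (Lm (insert s(u, v) T)).det ≤ (Lm T).det * (1 + c) := by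
  have hp := det_pos_Lm T hT
  by_cases he : s(u, v) ∈ T
  · rw [Finset.insert_eq_of_mem he]
    nlinarith
  · obtain ⟨R, hR, h1, h2, -⟩ := det_step T hT u v huv he hp
    rw [h1]
    have := h2 c hc
    gcongr

lemma det_insert_ge (T : Finset (Sym2 V)) (hT : ∀ e ∈ T, ¬ e.IsDiag) (u v : V) (huv : u ≠ v)
    (he : s(u, v) ∉ T)
    (c : ℝ) (x : V → ℝ) (hx : 0 < qf T x) (hc : c * qf T x ≤ (x u - x v) ^ 2) :
    (Lm T).det * (1 + c) ≤ (Lm (insert s(u, v) T)).det := by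
  have hp := det_pos_Lm T hT
  obtain ⟨R, hR, h1, -, h3⟩ := det_step T hT u v huv he hp
  rw [h1]
  have h4 := hc.trans (h3 x)
  have : c ≤ R := le_of_mul_le_mul_right h4 hx
  gcongr

/-- `R(u,v) ≤ G(u,u) + G(v,v)`. -/
lemma pair_bound (T : Finset (Sym2 V)) (u v : V) (a b : ℝ) (ha : 0 < a) (hb : 0 < b)
    (hu : ∀ x, x u ^ 2 ≤ a * qf T x) (hv : ∀ x, x v ^ 2 ≤ b * qf T x) (x : V → ℝ) :
    (x u - x v) ^ 2 ≤ (a + b) * qf T x := by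
  set p : V → ℝ := fun i => max (x i) 0 with hp
  set m : V → ℝ := fun i => max (-x i) 0 with hm
  have hp0 : ∀ i, 0 ≤ p i := fun i => le_max_right _ _
  have hm0 : ∀ i, 0 ≤ m i := fun i => le_max_right _ _
  have hpm : ∀ i, p i * m i = 0 := by
    intro i
    simp only [hp, hm]
    rcases le_total (x i) 0 with h | h
    · rw [max_eq_right h]; simp
    · rw [max_eq_right (by linarith : -x i ≤ 0)]; simp
  have hx : ∀ i, x i = p i - m i := by
    intro i
    simp only [hp, hm]
    rcases le_total (x i) 0 with h | h
    · rw [max_eq_right h, max_eq_left (by linarith)]; simp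
    · rw [max_eq_right (by linarith : -x i ≤ 0), max_eq_left h]; simp
  have hsplit : qf T p + qf T m ≤ qf T x := by
    have h1 : ∑ v, x v ^ 2 = ∑ v, p v ^ 2 + ∑ v, m v ^ 2 := by
      rw [← Finset.sum_add_distrib]
      refine Finset.sum_congr rfl fun i _ => ?_
      rw [hx i]; linear_combination (-2) * hpm i
    have h2 : ∑ e ∈ T, dq p e + ∑ e ∈ T, dq m e ≤ ∑ e ∈ T, dq x e := by
      rw [← Finset.sum_add_distrib]
      refine Finset.sum_le_sum fun e _ => ?_
      induction e with
      | _ i j =>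
      simp only [dq_mk]
      rw [hx i, hx j]
      nlinarith [hpm i, hpm j, mul_nonneg (hp0 i) (hm0 j), mul_nonneg (hp0 j) (hm0 i)]
    unfold qf; linarith
  have cs : ∀ s t A B : ℝ, 0 ≤ s → 0 ≤ t → s ^ 2 ≤ a * A → t ^ 2 ≤ b * B → 
      (s + t) ^ 2 ≤ (a + b) * (A + B) := by
    intro s t A B hs ht h1 h2
    have h1' : s ^ 2 / a ≤ A := by rw [div_le_iff₀ ha]; linarith
    have h2' : t ^ 2 / b ≤ B := by rw [div_le_iff₀ hb]; linarith
    have h3 : (s + t) ^ 2 ≤ (a + b) * (s ^ 2 / a + t ^ 2 / b) := by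
      have : (a + b) * (s ^ 2 / a + t ^ 2 / b) - (s + t) ^ 2 = (b * s - a * t) ^ 2 / (a * b) := by
        field_simp; ring
      have h5 : 0 ≤ (b * s - a * t) ^ 2 / (a * b) := by positivity
      linarith
    refine h3.trans ?_
    gcongr
  rcases le_total (x v) (x u) with h | h
  · have h1 := cs (p u) (m v) _ _ (hp0 u) (hm0 v) (hu p) (hv m)
    have h2 : (x u - x v) ^ 2 ≤ (p u + m v) ^ 2 := by
      apply pow_le_pow_left₀ (by linarith)
      rw [hx u, hx v]
      linarith [hp0 v, hm0 u]
    refine h2.trans (h1.trans ?_)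
    gcongr
  · have h1 := cs (m u) (p v) _ _ (hm0 u) (hp0 v) (hu m) (hv p)
    have h2 : (x u - x v) ^ 2 ≤ (m u + p v) ^ 2 := by
      rw [← neg_sq]
      apply pow_le_pow_left₀ (by linarith)
      rw [hx u, hx v]
      linarith [hp0 u, hm0 v]
    refine h2.trans (h1.trans ?_)
    have : (a + b) * (qf T m + qf T p) ≤ (a + b) * qf T x := by
      gcongr; linarith
    exact this

lemma deg_zero_bound (T : Finset (Sym2 V)) (v : V) (x : V → ℝ) : x v ^ 2 ≤ 1 * qf T x := by
  have h1 := Finset.single_le_sum (f := fun w => x w ^ 2) (fun i _ => sq_nonneg (x i))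
          (Finset.mem_univ v)
  have h2 : 0 ≤ ∑ e ∈ T, dq x e := Finset.sum_nonneg fun e _ => dq_nonneg x e
  unfold qf; linarith

lemma deg_one_bound (T : Finset (Sym2 V)) (v w : V) (hvw : v ≠ w) (h : s(v, w) ∈ T) (x : V → ℝ) :
    x v ^ 2 ≤ (2 / 3) * qf T x := by
  have h1 : ∑ i ∈ ({v, w} : Finset V), x i ^ 2 ≤ ∑ i, x i ^ 2 :=
    Finset.sum_le_sum_of_subset_of_nonneg (Finset.subset_univ _) (fun i _ _ => sq_nonneg _)
  rw [Finset.sum_pair hvw] at h1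
  have h2 := Finset.single_le_sum (f := fun e => dq x e) (fun i _ => dq_nonneg x i) h
  simp only [dq_mk] at h2
  unfold qf
  nlinarith [sq_nonneg (x v - 2 * x w)]

lemma deg_two_bound (T : Finset (Sym2 V)) (u v w : V) (huv : u ≠ v) (huw : u ≠ w) (hvw : v ≠ w)
    (h : s(u, v) ∈ T) (h' : s(u, w) ∈ T) (x : V → ℝ) :
    x u ^ 2 ≤ (1 / 2) * qf T x := by
  have h1 : ∑ i ∈ ({u, v, w} : Finset V), x i ^ 2 ≤ ∑ i, x i ^ 2 :=
    Finset.sum_le_sum_of_subset_of_nonneg (Finset.subset_univ _) (fun i _ _ => sq_nonneg _)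
  rw [Finset.sum_insert (by simp [huv, huw]), Finset.sum_pair hvw] at h1
  have h2 : ∑ e ∈ ({s(u, v), s(u, w)} : Finset (Sym2 V)), dq x e ≤ ∑ e ∈ T, dq x e :=
    Finset.sum_le_sum_of_subset_of_nonneg (by
      intro e he
      simp only [Finset.mem_insert, Finset.mem_singleton] at he
      rcases he with rfl | rfl <;> assumption) (fun i _ _ => dq_nonneg x i)
  rw [Finset.sum_pair (by simp [hvw, huw])] at h2
  simp only [dq_mk] at h2
  unfold qf
  nlinarith [sq_nonneg (x u - 2 * x w), sq_nonneg (x u - 2 * x v)]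

end matrixPart

lemma nst_starPlusEdges (n : ℕ) (T : Finset (Sym2 (Fin n))) :
    nst (starPlusEdges n T) = (Lm T).det := by
  unfold nst
  congr 1
  have key : ∀ i k : Fin n, (∃ a b : Fin n, i.castSucc = a.castSucc ∧ k.castSucc = b.castSucc ∧ s(a, b) ∈ T)
      ↔ s(i, k) ∈ T := by
    intro i k
    constructor
    · rintro ⟨a, b, h1, h2, h3⟩
      rw [Fin.castSucc_inj] at h1 h2
      subst h1 h2; exact h3
    · intro h; exact ⟨i, k, rfl, rfl, h⟩
  have key2 : ∀ i : Fin n, ¬ (∃ a b : Fin n, i.castSucc = a.castSucc ∧ Fin.last n = b.castSucc ∧ s(a, b) ∈ T) := by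
    rintro i ⟨a, b, -, h, -⟩
    exact (Fin.castSucc_lt_last b).ne h.symm
  ext i j
  simp only [Matrix.submatrix_apply, lapG, Lm, Fin.castSucc_inj]
  by_cases h : i = j
  · subst h
    simp only [if_true, starPlusEdges, Fin.sum_univ_castSucc, key, key2, starW]
    simp [(Fin.castSucc_lt_last _).ne, add_comm]
  · simp only [if_neg h, starPlusEdges, key, starW]
    simp [(Fin.castSucc_lt_last _).ne]

section fanPart
open Real (goldenRatio)

/-- The edges of the path `0 - 1 - ... - (k-1)`. -/
def TE (n k : ℕ) : Finset (Sym2 (Fin n)) :=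
  (univ.filter (fun p : Fin n × Fin n => (p.1 : ℕ) + 1 = p.2 ∧ (p.2 : ℕ) < k)).image
    (fun p => s(p.1, p.2))

lemma mem_TE (n k : ℕ) (a b : Fin n) : s(a, b) ∈ TE n k ↔
    ((a : ℕ) + 1 = b ∧ (b : ℕ) < k) ∨ ((b : ℕ) + 1 = a ∧ (a : ℕ) < k) := by
  simp only [TE, mem_image, mem_filter, mem_univ, true_and, Prod.exists]
  constructor
  · rintro ⟨c, d, h, he⟩
    rw [Sym2.eq_iff] at he
    rcases he with ⟨rfl, rfl⟩ | ⟨rfl, rfl⟩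
    · exact Or.inl h
    · exact Or.inr h
  · rintro (h | h)
    · exact ⟨a, b, h, rfl⟩
    · exact ⟨b, a, h, Sym2.eq_swap⟩

lemma TE_diag (n k : ℕ) : ∀ e ∈ TE n k, ¬ e.IsDiag := by
  intro e
  induction e with
  | _ a b =>
  rw [mem_TE]
  intro h hd
  have : a = b := by simpa using hd
  subst this
  omega

lemma TE_one (n : ℕ) : TE n 1 = ∅ := by
  ext e
  induction e with
  | _ a b => rw [mem_TE]; simp; omega

lemma TE_succ (n k : ℕ) (hk : k + 1 < n) :
    TE n (k + 2) = insert s((⟨k, by omega⟩ : Fin n), (⟨k + 1, hk⟩ : Fin n)) (TE n (k + 1)) := by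
  ext e
  induction e with
  | _ a b =>
  rw [mem_insert, mem_TE, mem_TE, Sym2.eq_iff, Fin.ext_iff, Fin.ext_iff, Fin.ext_iff, Fin.ext_iff]
  simp only
  omega

lemma TE_notMem (n k : ℕ) (hk : k + 1 < n) :
    s((⟨k, by omega⟩ : Fin n), (⟨k + 1, hk⟩ : Fin n)) ∉ TE n (k + 1) := by
  rw [mem_TE]; simp only; omega

lemma fan_eq (n : ℕ) : fanW n = starPlusEdges n (TE n n) := by
  funext i j
  unfold fanW starPlusEdges
  congr 1
  apply if_congr _ rfl rfl
  constructor
  · intro h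
    have hi : (i : ℕ) < n := by
      rcases h with ⟨h1, h2⟩ | ⟨h1, h2⟩
      · have := j.is_lt; omega
      · have : (i : ℕ) ≠ n := fun h => h2 (Fin.ext h)
        have := i.is_lt; omega
    have hj : (j : ℕ) < n := by
      rcases h with ⟨h1, h2⟩ | ⟨h1, h2⟩
      · have : (j : ℕ) ≠ n := fun h => h2 (Fin.ext h)
        have := j.is_lt; omega
      · have := i.is_lt; omega
    refine ⟨⟨i, hi⟩, ⟨j, hj⟩, rfl, rfl, ?_⟩
    rw [mem_TE]
    simp only
    omega
  · rintro ⟨a, b, rfl, rfl, h⟩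
    rw [mem_TE] at h
    simp only [Fin.val_castSucc, ne_eq, (Fin.castSucc_lt_last _).ne, not_false_eq_true, and_true]
    omega

lemma TE_sum (n : ℕ) (y : ℕ → ℝ) : ∀ k, k + 1 ≤ n →
    ∑ e ∈ TE n (k + 1), dq (fun i : Fin n => y i) e = ∑ i ∈ range k, (y i - y (i + 1)) ^ 2 := by
  intro k
  induction k with
  | zero => intro _; simp [TE_one]
  | succ k ih =>
    intro hk
    rw [TE_succ n k (by omega), sum_insert (TE_notMem n k (by omega)), ih (by omega), dq_mk,
      sum_range_succ, add_comm]

lemma gold_energy (k : ℕ) :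
    ∑ i ∈ range (k + 1), (goldenRatio ^ (2 * i)) ^ 2
      + ∑ i ∈ range k, (goldenRatio ^ (2 * i) - goldenRatio ^ (2 * (i + 1))) ^ 2
      ≤ goldenRatio ^ (4 * k + 1) := by
  have hg := Real.goldenRatio_sq
  induction k with
  | zero => simpa using Real.one_lt_goldenRatio.le
  | succ k ih =>
    rw [sum_range_succ _ (k + 1), sum_range_succ (fun i => (goldenRatio ^ (2 * i) - goldenRatio ^ (2 * (i + 1))) ^ 2) k]
    have e1 : (goldenRatio ^ (2 * (k + 1))) ^ 2 = goldenRatio ^ (4 * k) * goldenRatio ^ 4 := by ring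
    have e2 : (goldenRatio ^ (2 * k) - goldenRatio ^ (2 * (k + 1))) ^ 2
        = goldenRatio ^ (4 * k) * (1 - goldenRatio ^ 2) ^ 2 := by ring
    have e3 : goldenRatio ^ (4 * (k + 1) + 1) = goldenRatio ^ (4 * k) * goldenRatio ^ 5 := by ring
    have e4 : goldenRatio ^ (4 * k + 1) = goldenRatio ^ (4 * k) * goldenRatio := by ring
    have e5 : goldenRatio ^ 5 = goldenRatio + goldenRatio ^ 4 + (1 - goldenRatio ^ 2) ^ 2 := by
      have h3 : goldenRatio ^ 3 = 2 * goldenRatio + 1 := by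
        rw [pow_succ, hg]; linear_combination hg
      have h4 : goldenRatio ^ 4 = 3 * goldenRatio + 2 := by
        rw [pow_succ, h3]; linear_combination 2 * hg
      have h5 : goldenRatio ^ 5 = 5 * goldenRatio + 3 := by
        rw [pow_succ, h4]; linear_combination 3 * hg
      rw [h5, h4, hg]; linear_combination -hg
    rw [e3, e5, e1, e2]
    rw [e4] at ih
    nlinarith

lemma fan_step (n k : ℕ) (hk : k + 1 < n) :
    (Lm (TE n (k + 1))).det * goldenRatio ^ 2 ≤ (Lm (TE n (k + 2))).det := by
  have hg := Real.goldenRatio_sq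
  have hpos := Real.goldenRatio_pos
  rw [TE_succ n k hk]
  have h1 : goldenRatio ^ 2 = 1 + goldenRatio := by rw [hg]; ring
  rw [h1]
  set y : ℕ → ℝ := fun i => if i ≤ k then goldenRatio ^ (2 * i) else
    if i = k + 1 then -goldenRatio ^ (2 * k + 1) else 0 with hy
  have hs : ∑ v : Fin n, y v ^ 2 = ∑ i ∈ range (k + 1), (goldenRatio ^ (2 * i)) ^ 2
      + (goldenRatio ^ (2 * k + 1)) ^ 2 := by
    rw [Fin.sum_univ_eq_sum_range (fun i => y i ^ 2) n]
    have : ∑ i ∈ range n, y i ^ 2 = ∑ i ∈ range (k + 2), y i ^ 2 := by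
      symm
      apply sum_subset
      · intro i; simp only [mem_range]; omega
      · intro i _ h2
        simp only [mem_range] at h2
        have e1 : ¬ i ≤ k := by omega
        have e2 : ¬ i = k + 1 := by omega
        simp [hy, e1, e2]
    rw [this, sum_range_succ]
    congr 1
    · apply sum_congr rfl
      intro i hi
      have : i ≤ k := by have := mem_range.1 hi; omega
      simp [hy, this]
    · simp [hy]
  have hT : ∑ e ∈ TE n (k + 1), dq (fun i : Fin n => y i) e
      = ∑ i ∈ range k, (goldenRatio ^ (2 * i) - goldenRatio ^ (2 * (i + 1))) ^ 2 := by
    rw [TE_sum n y k (by omega)]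
    apply sum_congr rfl
    intro i hi
    have h1 : i ≤ k := by have := mem_range.1 hi; omega
    have h2 : i + 1 ≤ k := by have := mem_range.1 hi; omega
    simp only [hy, if_pos h1, if_pos h2]
  have hq : qf (TE n (k + 1)) (fun i : Fin n => y i) ≤ goldenRatio ^ (4 * k) * (goldenRatio + goldenRatio ^ 2) := by
    unfold qf
    rw [hs, hT]
    have := gold_energy k
    have e : goldenRatio ^ (4 * k) * (goldenRatio + goldenRatio ^ 2)
      = goldenRatio ^ (4 * k + 1) + (goldenRatio ^ (2 * k + 1)) ^ 2 := by ring
    linarith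
  apply det_insert_ge _ (TE_diag _ _) _ _ (by simp [Fin.ext_iff]) (TE_notMem n k hk) _
    (fun i : Fin n => y i)
  · unfold qf
    have h2 : 0 ≤ ∑ e ∈ TE n (k + 1), dq (fun i : Fin n => y i) e :=
      Finset.sum_nonneg fun e _ => dq_nonneg _ e
    have h3 : 0 ≤ ∑ i ∈ range (k + 1), (goldenRatio ^ (2 * i)) ^ 2 :=
      Finset.sum_nonneg fun e _ => sq_nonneg _
    have h4 : 0 < (goldenRatio ^ (2 * k + 1)) ^ 2 := by positivity
    rw [hs]; linarith
  · have e : y k - y (k + 1) = goldenRatio ^ (2 * k) * (1 + goldenRatio) := by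
      simp [hy]; ring
    simp only
    rw [e]
    calc goldenRatio * qf (TE n (k + 1)) (fun i : Fin n => y i)
        ≤ goldenRatio * (goldenRatio ^ (4 * k) * (goldenRatio + goldenRatio ^ 2)) := by gcongr
      _ = (goldenRatio ^ (2 * k) * (1 + goldenRatio)) ^ 2 := by
        rw [mul_pow]
        have : (goldenRatio ^ (2 * k)) ^ 2 = goldenRatio ^ (4 * k) := by ring
        rw [this]
        linear_combination (goldenRatio ^ (4 * k) * (1 + goldenRatio)) * hg

lemma fan_lower (n : ℕ) (hn : 1 ≤ n) : (goldenRatio ^ 2) ^ (n - 1) ≤ nst (fanW n) := by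
  rw [fan_eq, nst_starPlusEdges]
  have : ∀ k, k + 1 ≤ n → (goldenRatio ^ 2) ^ k ≤ (Lm (TE n (k + 1))).det := by
    intro k
    induction k with
    | zero => intro _; simp [TE_one, Lm_empty]
    | succ k ih =>
      intro hk
      refine le_trans ?_ (fan_step n k (by omega))
      rw [pow_succ]
      have := ih (by omega)
      gcongr
  have h := this (n - 1) (by omega)
  rwa [Nat.sub_add_cancel hn] at h

end fanPart

section listPart
variable {V : Type*} [Fintype V] [DecidableEq V]

/-- Edges of a path. -/
def pe : List V → Finset (Sym2 V)
  | [] => ∅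
  | [_] => ∅
  | a :: b :: l => insert s(a, b) (pe (b :: l))

/-- Energy of a path. -/
def en (x : V → ℝ) : List V → ℝ
  | [] => 0
  | [a] => x a ^ 2
  | a :: b :: l => x a ^ 2 + (x a - x b) ^ 2 + en x (b :: l)

lemma mem_of_mem_pe : ∀ (l : List V) (e : Sym2 V), e ∈ pe l → ∀ v ∈ e, v ∈ l
  | [], e, h, v, hv => by simp [pe] at h
  | [a], e, h, v, hv => by simp [pe] at h
  | a :: b :: l, e, h, v, hv => by
    simp only [pe, mem_insert] at h
    rcases h with rfl | h
    · rw [Sym2.mem_iff] at hv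
      rcases hv with rfl | rfl <;> simp
    · exact List.mem_cons_of_mem _ (mem_of_mem_pe (b :: l) e h v hv)

lemma head_edge_notMem (a b : V) (l : List V) (h : (a :: b :: l).Nodup) : s(a, b) ∉ pe (b :: l) := by
  intro he
  have := mem_of_mem_pe _ _ he a (by simp)
  exact (List.nodup_cons.1 h).1 this

lemma pe_diag : ∀ (l : List V), l.Nodup → ∀ e ∈ pe l, ¬ e.IsDiag
  | [], _, e, h => by simp [pe] at h
  | [a], _, e, h => by simp [pe] at h
  | a :: b :: l, hl, e, h => by
    simp only [pe, mem_insert] at h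
    rcases h with rfl | h
    · have := (List.nodup_cons.1 hl).1
      simp at this ⊢
      tauto
    · exact pe_diag (b :: l) (List.nodup_cons.1 hl).2 e h

lemma pe_card : ∀ (a : V) (l : List V), (a :: l).Nodup → (pe (a :: l)).card = l.length
  | a, [], _ => by simp [pe]
  | a, b :: l, hl => by
    rw [pe, card_insert_of_notMem (head_edge_notMem a b l hl), pe_card b l (List.nodup_cons.1 hl).2]
    simp

lemma pe_subset (E : Finset (Sym2 V)) : ∀ (l : List V), l.IsChain (fun a b => s(a, b) ∈ E) → pe l ⊆ E
  | [], _ => by simp [pe]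
  | [a], _ => by simp [pe]
  | a :: b :: l, h => by
    rw [List.isChain_cons_cons] at h
    rw [pe, insert_subset_iff]
    exact ⟨h.1, pe_subset E (b :: l) h.2⟩

lemma mem_pe_append (a b : V) (t : List V) : ∀ s : List V, s(a, b) ∈ pe (s ++ a :: b :: t)
  | [] => by simp [pe]
  | [c] => by simp [pe]
  | c :: d :: s => by
    have := mem_pe_append a b t (d :: s)
    simp only [List.cons_append, pe, mem_insert] at this ⊢
    right; exact this

lemma en_eq (x : V → ℝ) : ∀ (l : List V), l.Nodup →
    en x l = ∑ v ∈ l.toFinset, x v ^ 2 + ∑ e ∈ pe l, dq x e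
  | [], _ => by simp [en, pe]
  | [a], _ => by simp [en, pe]
  | a :: b :: l, h => by
    rw [en, pe, sum_insert (head_edge_notMem a b l h), en_eq x (b :: l) (List.nodup_cons.1 h).2,
      List.toFinset_cons (a := a), sum_insert (by
        have := (List.nodup_cons.1 h).1
        rwa [List.mem_toFinset]), dq_mk]
    ring

lemma en_le (x : V → ℝ) (l : List V) (hl : l.Nodup) (T : Finset (Sym2 V)) (h : pe l ⊆ T) :
    en x l ≤ qf T x := by
  rw [en_eq x l hl]
  have h1 : ∑ i ∈ l.toFinset, x i ^ 2 ≤ ∑ i, x i ^ 2 :=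
    Finset.sum_le_sum_of_subset_of_nonneg (Finset.subset_univ _) (fun i _ _ => sq_nonneg _)
  have h2 := Finset.sum_le_sum_of_subset_of_nonneg h (fun e _ _ => dq_nonneg x e)
  unfold qf; linarith

lemma en_end (x : V → ℝ) : ∀ (a : V) (t : List V),
    (Nat.fib (2 * t.length + 2) : ℝ) * x a ^ 2 ≤ Nat.fib (2 * t.length + 1) * en x (a :: t)
  | a, [] => by simp [en]
  | a, b :: t => by
    have ih := en_end x b t
    have hF1 : 0 < (Nat.fib (2 * t.length + 1) : ℝ) := by
      exact_mod_cast Nat.fib_pos.2 (by omega)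
    have h3 : (Nat.fib (2 * (b :: t).length + 1) : ℝ)
        = Nat.fib (2 * t.length + 1) + Nat.fib (2 * t.length + 2) := by
      have : 2 * (b :: t).length + 1 = 2 * t.length + 1 + 2 := by simp; ring
      rw [this, Nat.fib_add_two]; push_cast; ring
    have h4 : (Nat.fib (2 * (b :: t).length + 2) : ℝ)
        = Nat.fib (2 * t.length + 2) + Nat.fib (2 * (b :: t).length + 1) := by
      have : 2 * (b :: t).length + 2 = 2 * t.length + 2 + 2 := by simp; ring
      rw [this, Nat.fib_add_two]; push_cast; rfl
    rw [h4, h3, en]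
    set F1 := (Nat.fib (2 * t.length + 1) : ℝ)
    have hF2 : 0 ≤ (Nat.fib (2 * t.length + 2) : ℝ) := by positivity
    set F2 := (Nat.fib (2 * t.length + 2) : ℝ)
    set E := en x (b :: t)
    have h5 : (F1 + F2) * (F2 * x b ^ 2) ≤ (F1 + F2) * (F1 * E) := by gcongr
    have h6 : 0 ≤ F1 * ((F1 + F2) * (x a ^ 2 + (x a - x b) ^ 2 + E) - (F2 + (F1 + F2)) * x a ^ 2) := by
      nlinarith [sq_nonneg (F1 * x a - (F1 + F2) * x b)]
    have := nonneg_of_mul_nonneg_right h6 hF1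
    linarith

/-- Coefficients of the two-ended energy of a path. -/
noncomputable def AB : ℕ → ℝ × ℝ
  | 0 => (2, 1)
  | t + 1 => ((2 * (AB t).1 + 1) / ((AB t).1 + 1), (AB t).2 / ((AB t).1 + 1))

lemma AB_inv : ∀ t, 0 < (AB t).1 ∧ 0 < (AB t).2 ∧ (AB t).1 ^ 2 - (AB t).1 - 1 = (AB t).2 ^ 2
  | 0 => by norm_num [AB]
  | t + 1 => by
    obtain ⟨h1, h2, h3⟩ := AB_inv t
    refine ⟨by simp only [AB]; positivity, by simp only [AB]; positivity, ?_⟩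
    simp only [AB]
    have : (AB t).1 + 1 ≠ 0 := by positivity
    rw [div_pow, div_pow, ← h3]
    field_simp
    ring

lemma AB_gt (t : ℕ) : Real.goldenRatio < (AB t).1 := by
  obtain ⟨h1, h2, h3⟩ := AB_inv t
  have hg := Real.goldenRatio_sq
  have hp := Real.one_lt_goldenRatio
  by_contra! h
  have : 0 < (AB t).2 ^ 2 := by positivity
  nlinarith

lemma AB_anti : Antitone (fun t => (AB t).1) := by
  apply antitone_nat_of_succ_le
  intro t
  obtain ⟨h1, h2, h3⟩ := AB_inv t
  simp only [AB]
  rw [div_le_iff₀ (by positivity)]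
  nlinarith [sq_nonneg (AB t).2]

lemma en_two (x : V → ℝ) (z : V) : ∀ (t : List V) (a : V),
    (AB t.length).1 * x a ^ 2 + (AB t.length).1 * x z ^ 2 - 2 * (AB t.length).2 * (x a * x z)
      ≤ en x (a :: (t ++ [z]))
  | [], a => by simp [AB, en]; nlinarith
  | b :: t, a => by
    have ih := en_two x z t b
    obtain ⟨h1, h2, h3⟩ := AB_inv t.length
    rw [List.cons_append, en, List.length_cons]
    simp only [AB]
    set A := (AB t.length).1
    set B := (AB t.length).2
    refine le_trans ?_ (add_le_add_right ih _)
    have key : x a ^ 2 + (x a - x b) ^ 2 + (A * x b ^ 2 + A * x z ^ 2 - 2 * B * (x b * x z))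
      - ((2 * A + 1) / (A + 1) * x a ^ 2 + (2 * A + 1) / (A + 1) * x z ^ 2
        - 2 * (B / (A + 1)) * (x a * x z)) = ((1 + A) * x b - x a - B * x z) ^ 2 / (A + 1) := by
      field_simp
      linear_combination (x z ^ 2) * h3
    have : 0 ≤ ((1 + A) * x b - x a - B * x z) ^ 2 / (A + 1) := by positivity
    linarith

lemma close_bound (x : V → ℝ) (a z : V) (t : List V) (hl : (a :: (t ++ [z])).Nodup)
    (T : Finset (Sym2 V)) (h : pe (a :: (t ++ [z])) ⊆ T) :
    (x a - x z) ^ 2 ≤ (2 / (AB t.length).1) * qf T x := by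
  have h1 := en_two x z t a
  have h2 := en_le x _ hl T h
  obtain ⟨hA, hB, h3⟩ := AB_inv t.length
  set A := (AB t.length).1
  set B := (AB t.length).2
  have hAB : B ≤ A := by nlinarith
  rw [div_mul_eq_mul_div, le_div_iff₀ hA]
  nlinarith [mul_nonneg (sub_nonneg.2 hAB) (sq_nonneg (x a + x z)), mul_nonneg hB.le (sq_nonneg (x a - x z))]

lemma det_path : ∀ (l : List V), l ≠ [] → l.Nodup → ∀ (T : Finset (Sym2 V)), (∀ e ∈ T, ¬ e.IsDiag) →
    (Lm (pe l ∪ T)).det ≤ Nat.fib (2 * l.length) * (Lm T).det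
  | [], h, _, _, _ => absurd rfl h
  | [a], _, _, T, _ => by simp [pe]
  | a :: b :: t, _, hl, T, hT => by
    have hl' := (List.nodup_cons.1 hl).2
    have hab : a ≠ b := by
      have := (List.nodup_cons.1 hl).1
      simp at this; tauto
    have ih := det_path (b :: t) (by simp) hl' T hT
    have hT' : ∀ e ∈ pe (b :: t) ∪ T, ¬ e.IsDiag := by
      intro e he
      rcases mem_union.1 he with h | h
      · exact pe_diag _ hl' e h
      · exact hT e h
    rw [pe, insert_union]
    have hF1 : 0 < (Nat.fib (2 * t.length + 1) : ℝ) := by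
      exact_mod_cast Nat.fib_pos.2 (by omega)
    have hF2 : 0 < (Nat.fib (2 * t.length + 2) : ℝ) := by
      exact_mod_cast Nat.fib_pos.2 (by omega)
    have hb := det_insert_le (pe (b :: t) ∪ T) hT' a b hab
      (1 + Nat.fib (2 * t.length + 1) / Nat.fib (2 * t.length + 2)) (by positivity)
      (pair_bound _ a b 1 _ one_pos (by positivity) (deg_zero_bound _ a) (by
        intro x
        have h1 := en_end x b t
        have h2 := en_le x (b :: t) hl' (pe (b :: t) ∪ T) subset_union_left
        rw [div_mul_eq_mul_div, le_div_iff₀ hF2]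
        nlinarith))
    refine hb.trans ?_
    have e0 : 2 * (b :: t).length = 2 * t.length + 2 := by simp; ring
    rw [e0] at ih
    have e1 : (Nat.fib (2 * (a :: b :: t).length) : ℝ)
        = Nat.fib (2 * t.length + 2) * (1 + (1 + Nat.fib (2 * t.length + 1) / Nat.fib (2 * t.length + 2))) := by
      have : 2 * (a :: b :: t).length = 2 * t.length + 2 + 2 := by simp; ring
      rw [this, Nat.fib_add_two]
      have : Nat.fib (2 * t.length + 2 + 1) = Nat.fib (2 * t.length + 1) + Nat.fib (2 * t.length + 2) := 
        Nat.fib_add_two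
      rw [this]
      field_simp
      push_cast; ring
    rw [e1]
    calc _ ≤ (Nat.fib (2 * t.length + 2) * (Lm T).det) * (1 + (1 + (Nat.fib (2 * t.length + 1) : ℝ) / Nat.fib (2 * t.length + 2))) := by gcongr
      _ = _ := by ring

/-- Edges of a family of paths. -/
def EsP : List (List V) → Finset (Sym2 V)
  | [] => ∅
  | l :: Ps => pe l ∪ EsP Ps

lemma pe_subset_EsP : ∀ (Ps : List (List V)) (l : List V), l ∈ Ps → pe l ⊆ EsP Ps
  | [], l, h => by simp at h
  | l' :: Ps, l, h => by
    rcases List.mem_cons.1 h with rfl | h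
    · exact subset_union_left
    · exact (pe_subset_EsP Ps l h).trans subset_union_right

lemma mem_EsP : ∀ (Ps : List (List V)) (e : Sym2 V), e ∈ EsP Ps → ∃ l ∈ Ps, e ∈ pe l
  | [], e, h => by simp [EsP] at h
  | l :: Ps, e, h => by
    rcases mem_union.1 h with h | h
    · exact ⟨l, by simp, h⟩
    · obtain ⟨l', h1, h2⟩ := mem_EsP Ps e h
      exact ⟨l', by simp [h1], h2⟩

lemma EsP_diag (Ps : List (List V)) (h : ∀ l ∈ Ps, l.Nodup) : ∀ e ∈ EsP Ps, ¬ e.IsDiag := by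
  intro e he
  obtain ⟨l, h1, h2⟩ := mem_EsP Ps e he
  exact pe_diag l (h l h1) e h2

lemma EsP_card : ∀ (Ps : List (List V)), (∀ l ∈ Ps, l ≠ [] ∧ l.Nodup) →
    Ps.Pairwise (fun l₁ l₂ => ∀ x ∈ l₁, x ∉ l₂) →
    (EsP Ps).card + Ps.length = Ps.flatten.length
  | [], _, _ => by simp [EsP]
  | l :: Ps, h, hp => by
    rw [List.pairwise_cons] at hp
    have ih := EsP_card Ps (fun l' h' => h l' (by simp [h'])) hp.2
    have hl := h l (by simp)
    have hd : Disjoint (pe l) (EsP Ps) := by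
      rw [Finset.disjoint_left]
      intro e h1 h2
      obtain ⟨l', h3, h4⟩ := mem_EsP Ps e h2
      induction e with
      | _ a b =>
      exact hp.1 l' h3 a (mem_of_mem_pe l _ h1 a (by simp)) (mem_of_mem_pe l' _ h4 a (by simp))
    rw [EsP, card_union_of_disjoint hd, List.flatten_cons, List.length_append, List.length_cons]
    cases l with
    | nil => exact absurd rfl hl.1
    | cons a t =>
      rw [pe_card a t hl.2, List.length_cons]
      omega

/-- Vertices forming single-vertex paths. -/
def sg : List (List V) → Finset V
  | [] => ∅
  | [v] :: Ps => insert v (sg Ps)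
  | _ :: Ps => sg Ps

lemma mem_sg (v : V) : ∀ (Ps : List (List V)), [v] ∈ Ps → v ∈ sg Ps
  | [], h => by simp at h
  | [] :: Ps, h => by
    simp at h
    simpa [sg] using mem_sg v Ps h
  | [w] :: Ps, h => by
    simp at h
    rcases h with rfl | h
    · simp [sg]
    · simp [sg, mem_sg v Ps h]
  | (a :: b :: t) :: Ps, h => by
    simp at h
    simpa [sg] using mem_sg v Ps h

/-- Closing edge of a path. -/
def ce : List V → Finset (Sym2 V)
  | [] => ∅
  | a :: t => {s(a, (a :: t).getLast (by simp))}

/-- Closing edges of long paths. -/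
def LC (K : ℕ) : List (List V) → Finset (Sym2 V)
  | [] => ∅
  | l :: Ps => (if K < l.length then ce l else ∅) ∪ LC K Ps

lemma LC_card (K : ℕ) : ∀ (Ps : List (List V)), (LC K Ps).card * K ≤ Ps.flatten.length
  | [] => by simp [LC]
  | l :: Ps => by
    have ih := LC_card K Ps
    rw [LC, List.flatten_cons, List.length_append]
    have h1 := card_union_le (if K < l.length then ce l else ∅) (LC K Ps)
    have h2 : (if K < l.length then ce l else ∅).card * K ≤ l.length := by
      split_ifs with h
      · cases l with
        | nil => simp [ce]
        | cons a t => simp only [ce, card_singleton]; omega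
      · simp
    calc _ ≤ ((if K < l.length then ce l else ∅).card + (LC K Ps).card) * K := by gcongr
      _ ≤ _ := by rw [add_mul]; omega

lemma mem_LC (K : ℕ) (a z : V) (t : List V) (hK : K < (a :: (t ++ [z])).length) :
    ∀ (Ps : List (List V)), (a :: (t ++ [z])) ∈ Ps → s(a, z) ∈ LC K Ps
  | [], h => by simp at h
  | l :: Ps, h => by
    rcases List.mem_cons.1 h with rfl | h
    · rw [LC, if_pos hK]
      simp [ce]
    · exact mem_union_right _ (mem_LC K a z t hK Ps h)

lemma fib_le (k : ℕ) : √5 * (Nat.fib (2 * k) : ℝ) ≤ Real.goldenRatio ^ (2 * k) := by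
  rw [Real.coe_fib_eq]
  have : (0:ℝ) < √5 := by positivity
  rw [mul_div_cancel₀ _ this.ne']
  have : 0 ≤ Real.goldenConj ^ (2 * k) := by rw [pow_mul]; positivity
  linarith

/-- `σ = φ² / √5`. -/
noncomputable def sig : ℝ := Real.goldenRatio ^ 2 / √5

lemma sig_ge : 1 ≤ sig := by
  unfold sig
  rw [le_div_iff₀ (by positivity), Real.goldenRatio_sq, Real.goldenRatio]
  have : √5 ^ 2 = 5 := Real.sq_sqrt (by norm_num)
  have : √5 ≤ 3 := by rw [Real.sqrt_le_left (by norm_num)]; norm_num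
  linarith

lemma det_cover : ∀ (Ps : List (List V)), (∀ l ∈ Ps, l ≠ [] ∧ l.Nodup) →
    (Lm (EsP Ps)).det * √5 ^ Ps.length * sig ^ (sg Ps).card
      ≤ Real.goldenRatio ^ (2 * Ps.flatten.length)
  | [], _ => by simp [EsP, Lm_empty, sg]
  | l :: Ps, h => by
    have hPs : ∀ l ∈ Ps, l ≠ [] ∧ l.Nodup := fun l' h' => h l' (by simp [h'])
    have ih := det_cover Ps hPs
    have hl := h l (by simp)
    have hd := EsP_diag Ps (fun l h => (hPs l h).2)
    have h1 := det_path l hl.1 hl.2 (EsP Ps) hd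
    have hpos := det_pos_Lm (EsP Ps) hd
    have hs0 : 0 < sig := lt_of_lt_of_le one_pos sig_ge
    have hg := Real.goldenRatio_pos
    have h2 : √5 * (Nat.fib (2 * l.length) : ℝ) * sig ^ (sg (l :: Ps)).card
        ≤ Real.goldenRatio ^ (2 * l.length) * sig ^ (sg Ps).card := by
      match l with
      | [] => exact absurd rfl hl.1
      | [v] =>
        have : (sg ([v] :: Ps)).card ≤ (sg Ps).card + 1 := by
          simp only [sg]; exact card_insert_le _ _
        have h3 : sig ^ (sg ([v] :: Ps)).card ≤ sig ^ ((sg Ps).card + 1) :=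
          pow_le_pow_right₀ sig_ge this
        have h4 : Real.goldenRatio ^ 2 = √5 * sig := by
          unfold sig; field_simp
        simp only [List.length_singleton, mul_one, Nat.fib_two, Nat.cast_one]
        rw [h4]
        calc _ ≤ √5 * sig ^ ((sg Ps).card + 1) := by gcongr
          _ = _ := by ring
      | a :: b :: t =>
        have : sg ((a :: b :: t) :: Ps) = sg Ps := by simp [sg]
        rw [this]
        have := fib_le (a :: b :: t).length
        gcongr
    rw [EsP, List.flatten_cons, List.length_append, List.length_cons]
    calc _ ≤ (Nat.fib (2 * l.length) * (Lm (EsP Ps)).det) * √5 ^ (Ps.length + 1) * sig ^ (sg (l :: Ps)).card := by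
          gcongr
      _ = ((Lm (EsP Ps)).det * √5 ^ Ps.length) * (√5 * (Nat.fib (2 * l.length) : ℝ) * sig ^ (sg (l :: Ps)).card) := by ring
      _ ≤ ((Lm (EsP Ps)).det * √5 ^ Ps.length) * (Real.goldenRatio ^ (2 * l.length) * sig ^ (sg Ps).card) := by gcongr
      _ = ((Lm (EsP Ps)).det * √5 ^ Ps.length * sig ^ (sg Ps).card) * Real.goldenRatio ^ (2 * l.length) := by ring
      _ ≤ Real.goldenRatio ^ (2 * Ps.flatten.length) * Real.goldenRatio ^ (2 * l.length) := by gcongr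
      _ = _ := by ring

end listPart

section coverPart
variable {n : ℕ}

lemma cover_perm {E : Finset (Sym2 (Fin n))} {Ps Qs : List (List (Fin n))} (h : Ps.Perm Qs)
    (hc : IsPathCoverOf n E Ps) : IsPathCoverOf n E Qs := by
  obtain ⟨h1, h2, h3⟩ := hc
  refine ⟨fun l hl => h1 l (h.mem_iff.2 hl), ?_, ?_⟩
  · refine h.pairwise h2 ?_
    intro a b hab x hx hx'
    exact hab x hx' hx
  · intro v
    obtain ⟨l, hl, hv⟩ := h3 v
    exact ⟨l, h.mem_iff.1 hl, hv⟩

lemma cover_rev {E : Finset (Sym2 (Fin n))} {l : List (Fin n)} {Ps : List (List (Fin n))}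
    (hc : IsPathCoverOf n E (l :: Ps)) : IsPathCoverOf n E (l.reverse :: Ps) := by
  obtain ⟨h1, h2, h3⟩ := hc
  refine ⟨?_, ?_, ?_⟩
  · intro l' hl'
    rcases List.mem_cons.1 hl' with rfl | hl'
    · obtain ⟨a, b, c⟩ := h1 l (by simp)
      refine ⟨by simpa using a, List.nodup_reverse.2 b, ?_⟩
      refine List.isChain_reverse.2 (List.IsChain.imp ?_ c)
      intro x y hxy
      rw [Sym2.eq_swap]; exact hxy
    · exact h1 l' (by simp [hl'])
  · rw [List.pairwise_cons] at h2 ⊢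
    refine ⟨fun l' hl' x hx => h2.1 l' hl' x (List.mem_reverse.1 hx), h2.2⟩
  · intro v
    obtain ⟨l', hl', hv⟩ := h3 v
    rcases List.mem_cons.1 hl' with rfl | hl'
    · exact ⟨l'.reverse, by simp, by simpa using hv⟩
    · exact ⟨l', by simp [hl'], hv⟩

lemma cover_join {E : Finset (Sym2 (Fin n))} {u v : Fin n} {s t : List (Fin n)}
    {Ps : List (List (Fin n))}
    (hc : IsPathCoverOf n E ((s ++ [u]) :: (v :: t) :: Ps)) (he : s(u, v) ∈ E) :
    IsPathCoverOf n E (((s ++ [u]) ++ (v :: t)) :: Ps) := by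
  obtain ⟨h1, h2, h3⟩ := hc
  rw [List.pairwise_cons, List.pairwise_cons] at h2
  obtain ⟨hp1, hp2, hp3⟩ := h2
  refine ⟨?_, ?_, ?_⟩
  · intro l' hl'
    rcases List.mem_cons.1 hl' with rfl | hl'
    · obtain ⟨-, b, c⟩ := h1 (s ++ [u]) (by simp)
      obtain ⟨-, b', c'⟩ := h1 (v :: t) (by simp)
      refine ⟨by simp, ?_, ?_⟩
      · rw [List.nodup_append']
        refine ⟨b, b', ?_⟩
        intro x hx hx'
        exact hp1 (v :: t) (by simp) x hx hx'
      · refine List.isChain_append.2 ⟨c, c', ?_⟩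
        intro x hx y hy
        simp at hx hy
        subst hx hy
        exact he
    · exact h1 l' (by simp [hl'])
  · rw [List.pairwise_cons]
    refine ⟨?_, hp3⟩
    intro l' hl' x hx
    rcases List.mem_append.1 hx with hx | hx
    · exact hp1 l' (by simp [hl']) x hx
    · exact hp2 l' hl' x hx
  · intro w
    obtain ⟨l', hl', hw⟩ := h3 w
    rcases List.mem_cons.1 hl' with rfl | hl'
    · exact ⟨_, List.mem_cons_self, List.mem_append_left _ hw⟩
    · rcases List.mem_cons.1 hl' with rfl | hl'
      · exact ⟨_, List.mem_cons_self, List.mem_append_right _ hw⟩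
      · exact ⟨l', by simp [hl'], hw⟩

/-- `u` is an endpoint of `l`. -/
def IsEnd (u : Fin n) (l : List (Fin n)) : Prop := (∃ t, l = u :: t) ∨ (∃ t, l = t ++ [u])

lemma join_exists {E : Finset (Sym2 (Fin n))} {u v : Fin n} {l1 l2 : List (Fin n)}
    {Ps : List (List (Fin n))} (hc : IsPathCoverOf n E Ps) (h1 : l1 ∈ Ps) (h2 : l2 ∈ Ps)
    (hne : l1 ≠ l2) (hu : IsEnd u l1) (hv : IsEnd v l2) (he : s(u, v) ∈ E) :
    ∃ Qs, IsPathCoverOf n E Qs ∧ Qs.length < Ps.length := by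
  have hm : l2 ∈ Ps.erase l1 := (List.mem_erase_of_ne hne.symm).2 h2
  have hperm : Ps.Perm (l1 :: l2 :: (Ps.erase l1).erase l2) :=
    (List.perm_cons_erase h1).trans ((List.perm_cons_erase hm).cons l1)
  have hc1 := cover_perm hperm hc
  set R := (Ps.erase l1).erase l2
  have hlen : Ps.length = R.length + 2 := by rw [hperm.length_eq]; simp
  have step1 : ∃ s, IsPathCoverOf n E ((s ++ [u]) :: l2 :: R) := by
    rcases hu with ⟨t, rfl⟩ | ⟨t, rfl⟩
    · refine ⟨t.reverse, ?_⟩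
      have := cover_rev hc1
      rwa [List.reverse_cons] at this
    · exact ⟨t, hc1⟩
  obtain ⟨s, hc2⟩ := step1
  have step2 : ∃ t, IsPathCoverOf n E ((s ++ [u]) :: (v :: t) :: R) := by
    rcases hv with ⟨t, rfl⟩ | ⟨t, rfl⟩
    · exact ⟨t, hc2⟩
    · refine ⟨t.reverse, ?_⟩
      have := cover_rev (cover_perm (List.Perm.swap _ _ _) hc2)
      rw [List.reverse_append] at this
      exact cover_perm (List.Perm.swap _ _ _) this
  obtain ⟨t, hc3⟩ := step2
  exact ⟨_, cover_join hc3 he, by simp [hlen]⟩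

lemma trichotomy {u : Fin n} {l : List (Fin n)} (h : u ∈ l) :
    IsEnd u l ∨ ∃ s t w w', l = s ++ w :: u :: w' :: t := by
  obtain ⟨s, t, rfl⟩ := List.append_of_mem h
  rcases List.eq_nil_or_concat s with rfl | ⟨s', w, rfl⟩
  · exact Or.inl (Or.inl ⟨t, rfl⟩)
  · cases t with
    | nil => exact Or.inl (Or.inr ⟨_, rfl⟩)
    | cons w' t => exact Or.inr ⟨s', t, w, w', by simp⟩

lemma interior_edges {Ps : List (List (Fin n))} (hnd : ∀ l ∈ Ps, l.Nodup) {u w w' : Fin n}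
    {s t : List (Fin n)} (h : s ++ w :: u :: w' :: t ∈ Ps) :
    u ≠ w ∧ u ≠ w' ∧ w ≠ w' ∧ s(u, w) ∈ EsP Ps ∧ s(u, w') ∈ EsP Ps := by
  have hn := hnd _ h
  rw [List.nodup_append'] at hn
  have h2 := hn.2.1
  simp only [List.nodup_cons, List.mem_cons, not_or] at h2
  refine ⟨fun h => h2.1.1 h.symm, h2.2.1.1, h2.1.2.1, ?_, ?_⟩
  · rw [Sym2.eq_swap]
    exact pe_subset_EsP Ps _ h (mem_pe_append w u (w' :: t) s)
  · have := mem_pe_append u w' t (s ++ [w])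
    rw [List.append_assoc, List.singleton_append] at this
    exact pe_subset_EsP Ps _ h this

lemma single_or_edge {Ps : List (List (Fin n))} (hnd : ∀ l ∈ Ps, l.Nodup) {v : Fin n}
    {l : List (Fin n)} (h : l ∈ Ps) (hv : v ∈ l) :
    v ∈ sg Ps ∨ ∃ w, v ≠ w ∧ s(v, w) ∈ EsP Ps := by
  obtain ⟨s, t, rfl⟩ := List.append_of_mem hv
  have hn := (hnd _ h)
  cases t with
  | cons w t =>
    right
    refine ⟨w, ?_, pe_subset_EsP Ps _ h (mem_pe_append v w t s)⟩
    rw [List.nodup_append'] at hn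
    have h2 := hn.2.1
    simp only [List.nodup_cons, List.mem_cons, not_or] at h2
    exact h2.1.1
  | nil =>
    rcases List.eq_nil_or_concat s with rfl | ⟨s', w, rfl⟩
    · left; exact mem_sg v Ps h
    · right
      rw [List.concat_eq_append, List.append_assoc] at h hn
      refine ⟨w, ?_, ?_⟩
      · rw [List.nodup_append'] at hn
        have h2 := hn.2.1
        simp at h2
        exact fun h => h2 h.symm
      · rw [Sym2.eq_swap]
        exact pe_subset_EsP Ps _ h (mem_pe_append w v [] s')

lemma classify {E : Finset (Sym2 (Fin n))} {Ps : List (List (Fin n))} (hc : IsPathCoverOf n E Ps)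
    (hmin : ∀ Qs, IsPathCoverOf n E Qs → Ps.length ≤ Qs.length) {u v : Fin n} (huv : u ≠ v)
    (he : s(u, v) ∈ E) :
    (∃ a z t, a :: (t ++ [z]) ∈ Ps ∧ s(u, v) = s(a, z)) ∨
    (∃ a b w w', s(u, v) = s(a, b) ∧ a ≠ b ∧ a ≠ w ∧ a ≠ w' ∧ w ≠ w' ∧ s(a, w) ∈ EsP Ps ∧ s(a, w') ∈ EsP Ps) := by
  have hnd : ∀ l ∈ Ps, l.Nodup := fun l hl => (hc.1 l hl).2.1
  obtain ⟨l1, hl1, hu⟩ := hc.2.2 u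
  obtain ⟨l2, hl2, hv⟩ := hc.2.2 v
  rcases trichotomy hu with hu' | ⟨s, t, w, w', rfl⟩
  swap
  · right
    exact ⟨u, v, w, w', rfl, huv, interior_edges hnd hl1⟩
  rcases trichotomy hv with hv' | ⟨s, t, w, w', rfl⟩
  swap
  · right
    exact ⟨v, u, w, w', Sym2.eq_swap, huv.symm, interior_edges hnd hl2⟩
  left
  by_cases hne : l1 = l2
  · subst hne
    have aux : ∀ a z : Fin n, a ≠ z → ∀ t t' : List (Fin n), a :: t = t' ++ [z] → 
        ∃ r, a :: t = a :: (r ++ [z]) := by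
      intro a z haz t t' h
      cases t' with
      | nil => simp at h; exact absurd h.1 haz
      | cons c r =>
        rw [List.cons_append] at h
        have := (List.cons.inj h).2
        exact ⟨r, by rw [this]⟩
    rcases hu' with ⟨t, h1⟩ | ⟨t, h1⟩ <;> rcases hv' with ⟨t', h2⟩ | ⟨t', h2⟩
    · rw [h1] at h2
      exact absurd (List.cons.inj h2).1 huv
    · obtain ⟨r, hr⟩ := aux u v huv t t' (h1 ▸ h2)
      refine ⟨u, v, r, ?_, rfl⟩
      rw [← hr, ← h1]; exact hl1
    · obtain ⟨r, hr⟩ := aux v u huv.symm t' t (h2 ▸ h1)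
      refine ⟨v, u, r, ?_, Sym2.eq_swap⟩
      rw [← hr, ← h2]; exact hl1
    · rw [h1] at h2
      have := List.append_inj_right' h2 (by simp)
      simp at this
      exact absurd this huv
  · exfalso
    obtain ⟨Qs, h1, h2⟩ := join_exists hc hl1 hl2 hne hu' hv' he
    exact absurd (hmin Qs h1) (by omega)

/-- Single vertices touched by `S`. -/
def tch (Ps : List (List (Fin n))) (S : Finset (Sym2 (Fin n))) : Finset (Fin n) :=
  (sg Ps).filter (fun v => ∃ e ∈ S, v ∈ e)

lemma factor {E : Finset (Sym2 (Fin n))} {Ps : List (List (Fin n))} (hc : IsPathCoverOf n E Ps)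
    (hmin : ∀ Qs, IsPathCoverOf n E Qs → Ps.length ≤ Qs.length) {u v : Fin n} (huv : u ≠ v)
    (he : s(u, v) ∈ E) (S : Finset (Sym2 (Fin n))) (hS : ∀ e ∈ S, ¬ e.IsDiag) (K : ℕ) (ρ : ℝ)
    (hr1 : 13 / 6 ≤ √5 * ρ) (hr2 : 5 / 2 ≤ √5 * ρ * sig) (hr3 : 1 + 2 / (AB K).1 ≤ √5 * ρ) :
    ∃ a b, s(u, v) = s(a, b) ∧ a ≠ b ∧ ∃ c : ℝ, 0 ≤ c ∧ 
      (∀ x, (x a - x b) ^ 2 ≤ c * qf (S ∪ EsP Ps) x) ∧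
      ((s(u, v) ∈ LC K Ps ∧ 1 + c ≤ √5) ∨ (1 + c ≤ √5 * ρ) ∨
        (1 + c ≤ √5 * ρ * sig ∧ ∃ w ∈ sg Ps, w ∈ s(u, v) ∧ w ∉ tch Ps S)) := by
  have hnd : ∀ l ∈ Ps, l.Nodup := fun l hl => (hc.1 l hl).2.1
  rcases classify hc hmin huv he with ⟨a, z, t, hl, heq⟩ | ⟨a, b, w, w', heq, hab, h1, h2, h3, h4, h5⟩
  · have haz : a ≠ z := by
      rintro rfl
      rw [Sym2.eq_iff] at heq
      rcases heq with ⟨rfl, rfl⟩ | ⟨rfl, rfl⟩ <;> exact huv rfl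
    have hA := AB_gt t.length
    have hg := Real.goldenRatio_pos
    have hApos : 0 < (AB t.length).1 := hg.trans hA
    refine ⟨a, z, heq, haz, 2 / (AB t.length).1, by positivity, fun x => ?_, ?_⟩
    · exact close_bound x a z t (hnd _ hl) _ ((pe_subset_EsP Ps _ hl).trans subset_union_right)
    · by_cases hK : K < (a :: (t ++ [z])).length
      · left
        refine ⟨heq ▸ mem_LC K a z t hK Ps hl, ?_⟩
        have : 2 / (AB t.length).1 ≤ 2 / Real.goldenRatio := by gcongr
        have h2 : 2 / Real.goldenRatio = √5 - 1 := by
          rw [div_eq_iff hg.ne', Real.goldenRatio]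
          have : √5 ^ 2 = 5 := Real.sq_sqrt (by norm_num)
          linear_combination (-1/2) * this
        linarith
      · right; left
        have hK' : t.length ≤ K := by simp at hK; omega
        have h6 : (AB K).1 ≤ (AB t.length).1 := AB_anti hK'
        have h7 : 0 < (AB K).1 := (AB_inv K).1
        have : 2 / (AB t.length).1 ≤ 2 / (AB K).1 := by gcongr
        linarith
  · have hU : ∀ {e}, e ∈ EsP Ps → e ∈ S ∪ EsP Ps := fun h => mem_union_right _ h
    have ha := deg_two_bound (S ∪ EsP Ps) a w w' h1 h2 h3 (hU h4) (hU h5)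
    obtain ⟨l, hl, hb⟩ := hc.2.2 b
    refine ⟨a, b, heq, hab, ?_⟩
    have one : ∀ w, b ≠ w → s(b, w) ∈ S ∪ EsP Ps → ∃ c : ℝ, 0 ≤ c ∧ 
      (∀ x, (x a - x b) ^ 2 ≤ c * qf (S ∪ EsP Ps) x) ∧
      ((s(u, v) ∈ LC K Ps ∧ 1 + c ≤ √5) ∨ (1 + c ≤ √5 * ρ) ∨
        (1 + c ≤ √5 * ρ * sig ∧ ∃ w ∈ sg Ps, w ∈ s(u, v) ∧ w ∉ tch Ps S)) := by
      intro w hw hwe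
      refine ⟨1 / 2 + 2 / 3, by norm_num, pair_bound _ a b _ _ (by norm_num) (by norm_num) ha
        (deg_one_bound _ b w hw hwe), Or.inr (Or.inl ?_)⟩
      linarith
    rcases single_or_edge hnd hl hb with hs | ⟨y, hy, hye⟩
    · by_cases ht : b ∈ tch Ps S
      · obtain ⟨e, heS, hbe⟩ := (mem_filter.1 ht).2
        obtain ⟨y, rfl⟩ := Sym2.mem_iff_exists.1 hbe
        refine one y ?_ (mem_union_left _ heS)
        have := hS _ heS
        simpa using this
      · refine ⟨1 / 2 + 1, by norm_num, pair_bound _ a b _ _ (by norm_num) (by norm_num) ha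
          (deg_zero_bound _ b), Or.inr (Or.inr ⟨by linarith, b, hs, by rw [heq]; simp, ht⟩)⟩
    · exact one y hy (hU hye)

lemma det_extra {E : Finset (Sym2 (Fin n))} {Ps : List (List (Fin n))} (hc : IsPathCoverOf n E Ps)
    (hE : ∀ e ∈ E, ¬ e.IsDiag)
    (hmin : ∀ Qs, IsPathCoverOf n E Qs → Ps.length ≤ Qs.length) (K : ℕ) (ρ : ℝ)
    (hr0 : 0 < ρ) (hr1' : ρ ≤ 1)
    (hr1 : 13 / 6 ≤ √5 * ρ) (hr2 : 5 / 2 ≤ √5 * ρ * sig) (hr3 : 1 + 2 / (AB K).1 ≤ √5 * ρ)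
    (S : Finset (Sym2 (Fin n))) (hSE : S ⊆ E) :
    (Lm (S ∪ EsP Ps)).det ≤
      (Lm (EsP Ps)).det * (√5 ^ S.card * ρ ^ (S \ LC K Ps).card * sig ^ (tch Ps S).card) := by
  have hnd : ∀ l ∈ Ps, l.Nodup := fun l hl => (hc.1 l hl).2.1
  have hEs := EsP_diag Ps hnd
  have hs1 := sig_ge
  have hs0 : 0 < sig := lt_of_lt_of_le one_pos hs1
  have h50 : 0 < √5 := by positivity
  have h51 : 1 ≤ √5 := by rw [Real.one_le_sqrt]; norm_num
  induction S using Finset.induction_on with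
  | empty => simp [tch]
  | insert e S heS ih =>
    have hSE' : S ⊆ E := (subset_insert _ _).trans hSE
    have ih := ih hSE'
    have heE := hSE (mem_insert_self e S)
    have hSd : ∀ e ∈ S, ¬ e.IsDiag := fun e h => hE e (hSE' h)
    have hT : ∀ e ∈ S ∪ EsP Ps, ¬ e.IsDiag := by
      intro e he
      rcases mem_union.1 he with h | h
      · exact hSd e h
      · exact hEs e h
    have hed := hE e heE
    obtain ⟨u, v⟩ := e
    change s(u, v) ∈ E at heE
    change ¬ (s(u, v)).IsDiag at hed
    change s(u, v) ∉ S at heS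
    change (Lm (insert s(u, v) S ∪ EsP Ps)).det ≤ (Lm (EsP Ps)).det * (√5 ^ (insert s(u, v) S).card * ρ ^ (insert s(u, v) S \ LC K Ps).card * sig ^ (tch Ps (insert s(u, v) S)).card)
    have huv : u ≠ v := by simpa using hed
    obtain ⟨a, b, heq, hab, c, hc0, hcb, hcase⟩ :=
      factor hc hmin huv heE S hSd K ρ hr1 hr2 hr3
    have hdet := det_insert_le (S ∪ EsP Ps) hT a b hab c hc0 hcb
    rw [← heq, ← insert_union] at hdet
    have hmono : tch Ps S ⊆ tch Ps (insert s(u, v) S) := by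
      intro w hw
      obtain ⟨h1, e, h2, h3⟩ := mem_filter.1 hw
      exact mem_filter.2 ⟨h1, e, mem_insert_of_mem h2, h3⟩
    have hsig1 : sig ^ (tch Ps S).card ≤ sig ^ (tch Ps (insert s(u, v) S)).card :=
      pow_le_pow_right₀ hs1 (card_le_card hmono)
    have hrho1 : ρ ^ ((S \ LC K Ps).card + 1) ≤ ρ ^ (insert s(u, v) S \ LC K Ps).card := by
      apply pow_le_pow_of_le_one hr0.le hr1'
      by_cases h : s(u, v) ∈ LC K Ps
      · rw [insert_sdiff_of_mem _ h]; omega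
      · rw [insert_sdiff_of_notMem _ h]; exact card_insert_le _ _
    have hdE := det_pos_Lm (EsP Ps) hEs
    have main : √5 ^ S.card * ρ ^ (S \ LC K Ps).card * sig ^ (tch Ps S).card * (1 + c)
        ≤ √5 ^ (insert s(u, v) S).card * ρ ^ (insert s(u, v) S \ LC K Ps).card
          * sig ^ (tch Ps (insert s(u, v) S)).card := by
      rw [card_insert_of_notMem heS]
      rcases hcase with ⟨h1, h2⟩ | h2 | ⟨h2, w, hw1, hw2, hw3⟩
      · rw [insert_sdiff_of_mem _ h1]
        calc _ ≤ √5 ^ S.card * ρ ^ (S \ LC K Ps).card * sig ^ (tch Ps (insert s(u, v) S)).card * √5 := by gcongr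
          _ = _ := by ring
      · calc _ ≤ √5 ^ S.card * ρ ^ (S \ LC K Ps).card * sig ^ (tch Ps (insert s(u, v) S)).card * (√5 * ρ) := by gcongr
          _ = √5 ^ (S.card + 1) * ρ ^ ((S \ LC K Ps).card + 1) * sig ^ (tch Ps (insert s(u, v) S)).card := by ring
          _ ≤ _ := by gcongr
      · have hsig2 : sig ^ ((tch Ps S).card + 1) ≤ sig ^ (tch Ps (insert s(u, v) S)).card := by
          apply pow_le_pow_right₀ hs1
          rw [← card_insert_of_notMem hw3]
          apply card_le_card
          rw [insert_subset_iff]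
          exact ⟨mem_filter.2 ⟨hw1, _, mem_insert_self _ _, hw2⟩, hmono⟩
        calc _ ≤ √5 ^ S.card * ρ ^ (S \ LC K Ps).card * sig ^ (tch Ps S).card * (√5 * ρ * sig) := by gcongr
          _ = √5 ^ (S.card + 1) * ρ ^ ((S \ LC K Ps).card + 1) * sig ^ ((tch Ps S).card + 1) := by ring
          _ ≤ _ := by gcongr
    calc _ ≤ (Lm (S ∪ EsP Ps)).det * (1 + c) := hdet
      _ ≤ ((Lm (EsP Ps)).det * (√5 ^ S.card * ρ ^ (S \ LC K Ps).card * sig ^ (tch Ps S).card)) * (1 + c) := by gcongr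
      _ = (Lm (EsP Ps)).det * (√5 ^ S.card * ρ ^ (S \ LC K Ps).card * sig ^ (tch Ps S).card * (1 + c)) := by ring
      _ ≤ _ := by gcongr

lemma exists_cover (E : Finset (Sym2 (Fin n))) : ∃ Ps, IsPathCoverOf n E Ps := by
  refine ⟨(List.finRange n).map (fun v => [v]), ?_, ?_, ?_⟩
  · intro l hl
    obtain ⟨v, -, rfl⟩ := List.mem_map.1 hl
    exact ⟨by simp, by simp, List.isChain_singleton v⟩
  · rw [List.pairwise_map]
    refine (List.nodup_finRange n).imp ?_
    intro a b hab x hx hx'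
    simp at hx hx'
    exact hab (hx ▸ hx')
  · intro v
    exact ⟨[v], List.mem_map.2 ⟨v, List.mem_finRange v, rfl⟩, by simp⟩

lemma exists_min_cover (E : Finset (Sym2 (Fin n))) : ∃ Ps, IsPathCoverOf n E Ps ∧
    ∀ Qs, IsPathCoverOf n E Qs → Ps.length ≤ Qs.length := by
  classical
  have h : ∃ k, ∃ Ps, IsPathCoverOf n E Ps ∧ Ps.length = k := by
    obtain ⟨Ps, h⟩ := exists_cover E
    exact ⟨_, Ps, h, rfl⟩
  obtain ⟨Ps, h1, h2⟩ := Nat.find_spec h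
  exact ⟨Ps, h1, fun Qs hQ => h2 ▸ Nat.find_min' h ⟨Qs, hQ, rfl⟩⟩

lemma cover_flatten {E : Finset (Sym2 (Fin n))} {Ps : List (List (Fin n))}
    (hc : IsPathCoverOf n E Ps) : Ps.flatten.length = n := by
  have hnd : Ps.flatten.Nodup := by
    rw [List.nodup_flatten]
    refine ⟨fun l hl => (hc.1 l hl).2.1, hc.2.1.imp ?_⟩
    intro a b h x hx hx'
    exact h x hx hx'
  rw [← List.toFinset_card_of_nodup hnd]
  have : Ps.flatten.toFinset = univ := by
    ext v
    simp only [List.mem_toFinset, List.mem_flatten, mem_univ, iff_true]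
    exact hc.2.2 v
  rw [this]; simp

lemma core {P : Finset (Sym2 (Fin n))} (hP : ∀ e ∈ P, ¬ e.IsDiag) (hn : 1 ≤ n)
    (hcard : P.card ≤ n - 1) (K : ℕ) (ρ : ℝ) (hr0 : 0 < ρ) (hr1' : ρ ≤ 1)
    (hr1 : 13 / 6 ≤ √5 * ρ) (hr2 : 5 / 2 ≤ √5 * ρ * sig) (hr3 : 1 + 2 / (AB K).1 ≤ √5 * ρ) :
    ∃ (Ps : List (List (Fin n))) (m L : ℕ), IsPathCoverOf n P Ps ∧ Ps.length ≤ m + L ∧ L * K ≤ n ∧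
      (Lm P).det ≤ Real.goldenRatio ^ (2 * n) * ρ ^ m := by
  obtain ⟨Ps, hc, hmin⟩ := exists_min_cover P
  have hnd : ∀ l ∈ Ps, l ≠ [] ∧ l.Nodup := fun l hl => ⟨(hc.1 l hl).1, (hc.1 l hl).2.1⟩
  have hEsP : EsP Ps ⊆ P := by
    intro e he
    obtain ⟨l, h1, h2⟩ := mem_EsP Ps e he
    exact pe_subset P l (hc.1 l h1).2.2 h2
  set S := P \ EsP Ps with hS
  have hSP : S ∪ EsP Ps = P := sdiff_union_of_subset hEsP
  have hflat := cover_flatten hc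
  have hEc := EsP_card Ps hnd hc.2.1
  have hSc : S.card + (EsP Ps).card = P.card := card_sdiff_add_card_eq_card hEsP
  have hSq : S.card ≤ Ps.length := by omega
  have h1 := det_extra hc hP hmin K ρ hr0 hr1' hr1 hr2 hr3 S sdiff_subset
  rw [hSP] at h1
  have h2 := det_cover Ps hnd
  rw [hflat] at h2
  have hLC := LC_card K Ps
  rw [hflat] at hLC
  refine ⟨Ps, (S \ LC K Ps).card + (Ps.length - S.card), (LC K Ps).card, hc, ?_, hLC, ?_⟩
  · have := le_card_sdiff (LC K Ps) S
    omega
  have hs1 := sig_ge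
  have hs0 : 0 < sig := lt_of_lt_of_le one_pos hs1
  have h50 : 0 < √5 := by positivity
  have hdE := det_pos_Lm (EsP Ps) (EsP_diag Ps (fun l h => (hnd l h).2))
  have htch : sig ^ (tch Ps S).card ≤ sig ^ (sg Ps).card :=
    pow_le_pow_right₀ hs1 (card_le_card (filter_subset _ _))
  obtain ⟨k, hk⟩ := Nat.exists_eq_add_of_le hSq
  have hk' : Ps.length - S.card = k := by omega
  rw [hk'] 
  rw [hk] at h2
  have h3 : 1 ≤ (√5 * ρ) ^ k := one_le_pow₀ (by linarith)
  have h4 : (Lm P).det ≤ (Lm P).det * (√5 * ρ) ^ k :=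
    le_mul_of_one_le_right (det_pos_Lm P hP).le h3
  calc (Lm P).det ≤ (Lm P).det * (√5 * ρ) ^ k := h4
    _ ≤ ((Lm (EsP Ps)).det * (√5 ^ S.card * ρ ^ (S \ LC K Ps).card * sig ^ (sg Ps).card)) * (√5 * ρ) ^ k := by
      gcongr
      exact h1.trans (by gcongr)
    _ = ((Lm (EsP Ps)).det * √5 ^ (S.card + k) * sig ^ (sg Ps).card) * ρ ^ ((S \ LC K Ps).card + k) := by
      rw [mul_pow, pow_add, pow_add]; ring
    _ ≤ _ := by gcongr

end coverPart

lemma exists_rho (K : ℕ) : ∃ ρ : ℝ, 0 < ρ ∧ ρ < 1 ∧ 13 / 6 ≤ √5 * ρ ∧ 5 / 2 ≤ √5 * ρ * sig ∧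
    1 + 2 / (AB K).1 ≤ √5 * ρ := by
  have h5 : √5 ^ 2 = 5 := Real.sq_sqrt (by norm_num)
  have h50 : 0 < √5 := by positivity
  have hg := Real.goldenRatio_pos
  have hs : √5 * sig = Real.goldenRatio ^ 2 := by unfold sig; field_simp
  have hA := AB_gt K
  refine ⟨max (13 / 6 / √5) (max (5 / 2 / Real.goldenRatio ^ 2) ((1 + 2 / (AB K).1) / √5)), ?_, ?_, ?_, ?_, ?_⟩
  · exact lt_of_lt_of_le (by positivity) (le_max_left _ _)
  · refine max_lt ?_ (max_lt ?_ ?_)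
    · rw [div_lt_one h50]; nlinarith
    · rw [div_lt_one (by positivity), Real.goldenRatio_sq, Real.goldenRatio]
      nlinarith
    · rw [div_lt_one h50]
      have h1 : 2 / (AB K).1 < 2 / Real.goldenRatio := by gcongr
      have h2 : 2 / Real.goldenRatio = √5 - 1 := by
        rw [div_eq_iff hg.ne', Real.goldenRatio]
        linear_combination (-1/2) * h5
      linarith
  · rw [mul_comm, ← div_le_iff₀ h50]; exact le_max_left _ _
  · rw [mul_right_comm, hs, mul_comm, ← div_le_iff₀ (by positivity)]
    exact (le_max_left _ _).trans (le_max_right _ _)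
  · rw [mul_comm, ← div_le_iff₀ h50]; exact (le_max_right _ _).trans (le_max_right _ _)

theorem stmt14 (δ : ℝ) (hδ0 : 0 < δ) (hδ1 : δ < 1) :
    ∃ d : ℝ, 0 < d ∧ ∃ N : ℕ, ∀ n : ℕ, N ≤ n →
      ∀ E' : Finset (Sym2 (Fin n)), (∀ e ∈ E', ¬ e.IsDiag) →
        (¬ ∃ Ps : List (List (Fin n)), IsPathCoverOf n E' Ps ∧ (Ps.length : ℝ) < δ * n) →
        ∀ P : Finset (Sym2 (Fin n)), P ⊆ E' → P.card ≤ n - 1 →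
          nst (starPlusEdges n P) ≤ ((1 + d) ^ n)⁻¹ * nst (fanW n) := by
  set K := ⌈2 / δ⌉₊ with hK
  have hKδ : 2 / δ ≤ K := Nat.le_ceil _
  have hKpos : (0 : ℝ) < K := lt_of_lt_of_le (by positivity) hKδ
  obtain ⟨ρ, hr0, hr1, ha, hb, hc⟩ := exists_rho K
  set r := ρ ^ (δ / 4) with hr
  have hrpos : 0 < r := Real.rpow_pos_of_pos hr0 _
  have hrlt : r < 1 := Real.rpow_lt_one hr0.le hr1 (by positivity)
  have hg := Real.goldenRatio_pos
  obtain ⟨N, hN⟩ := exists_pow_lt_of_lt_one (show (0 : ℝ) < (Real.goldenRatio ^ 2)⁻¹ by positivity) hrlt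
  refine ⟨r⁻¹ - 1, ?_, N + 1, ?_⟩
  · have := (one_lt_inv₀ hrpos).2 hrlt
    linarith
  intro n hn E' hE' hcov P hPE hcard
  have hP : ∀ e ∈ P, ¬ e.IsDiag := fun e h => hE' e (hPE h)
  obtain ⟨Ps, m, L, hPs, hlen, hL, hdet⟩ := core hP (by omega) hcard K ρ hr0 hr1.le ha hb hc
  have hq : δ * n ≤ Ps.length := by
    by_contra! h
    refine hcov ⟨Ps, ⟨?_, hPs.2.1, hPs.2.2⟩, h⟩
    intro l hl
    obtain ⟨h1, h2, h3⟩ := hPs.1 l hl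
    exact ⟨h1, h2, List.IsChain.imp (fun a b h => hPE h) h3⟩
  have hm : δ / 4 * (2 * n : ℕ) ≤ m := by
    have h1 : (L : ℝ) * K ≤ n := by exact_mod_cast hL
    have h2 : (Ps.length : ℝ) ≤ m + L := by exact_mod_cast hlen
    have h3 : (L : ℝ) * (2 / δ) ≤ n := le_trans (by gcongr) h1
    have h4 : (L : ℝ) ≤ δ * n / 2 := by
      rw [mul_div_assoc', div_le_iff₀ hδ0] at h3
      linarith
    push_cast
    linarith
  have hrm : ρ ^ m ≤ r ^ (2 * n) := by
    rw [hr, ← Real.rpow_natCast, ← Real.rpow_natCast, ← Real.rpow_mul hr0.le]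
    exact Real.rpow_le_rpow_of_exponent_ge hr0 hr1.le hm
  have hrn : r ^ n * Real.goldenRatio ^ 2 ≤ 1 := by
    have h1 : r ^ n ≤ r ^ N := pow_le_pow_of_le_one hrpos.le hrlt.le (by omega)
    have h2 : r ^ n ≤ (Real.goldenRatio ^ 2)⁻¹ := h1.trans hN.le
    calc _ ≤ (Real.goldenRatio ^ 2)⁻¹ * Real.goldenRatio ^ 2 := by gcongr
      _ = 1 := inv_mul_cancel₀ (by positivity)
  have hfan := fan_lower n (by omega)
  rw [nst_starPlusEdges]
  have e1 : ((1 + (r⁻¹ - 1)) ^ n)⁻¹ = r ^ n := by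
    rw [add_sub_cancel, inv_pow, inv_inv]
  rw [e1]
  obtain ⟨k, rfl⟩ : ∃ k, n = k + 1 := ⟨n - 1, by omega⟩
  rw [Nat.add_sub_cancel] at hfan
  calc (Lm P).det ≤ Real.goldenRatio ^ (2 * (k + 1)) * ρ ^ m := hdet
    _ ≤ Real.goldenRatio ^ (2 * (k + 1)) * r ^ (2 * (k + 1)) := by gcongr
    _ = (r ^ (k + 1) * Real.goldenRatio ^ 2) * (r ^ (k + 1) * (Real.goldenRatio ^ 2) ^ k) := by
      rw [← pow_mul]; ring
    _ ≤ 1 * (r ^ (k + 1) * (Real.goldenRatio ^ 2) ^ k) := by gcongr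
    _ = r ^ (k + 1) * (Real.goldenRatio ^ 2) ^ k := one_mul _
    _ ≤ r ^ (k + 1) * nst (fanW (k + 1)) := by gcongr
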